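/- arXiv:0811.3576 — 2 statements merged into one kernel-verified Lean document; each statement's English description precedes it below -/
import Mathlib

section
/- Let X be an infinite semigroup satisfying properties (1) and (2). Endow the space of ultrafilters on X (the Stone–Čech compactification of the discrete space X) with its standard compact topology and with the semigroup operation in which A ∈ p*q if and only if {x ∈ X | {y ∈ X | xy ∈ A} ∈ q} ∈ p. Then for an ultrafilter p on X, the map q ↦ p*q is continuous if and only if p is principal, i.e. the topological centre of the semigroup of ultrafilters equals X. -/
open Cardinal

theorem aux_fin_union {X : Type*} [Infinite X] (f : X → Set X) (hf : ∀ x, #(f x) < #X)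
    (F : Finset X) : #{z : X | ∃ x ∈ F, z ∈ f x} < #X := by
  classical
  induction F using Finset.induction_on with
  | empty => 
    have : {z : X | ∃ x ∈ (∅ : Finset X), z ∈ f x} = ∅ := by ext; simp
    rw [this, Cardinal.mk_emptyCollection]
    exact lt_of_lt_of_le Cardinal.aleph0_pos (Cardinal.aleph0_le_mk X)
  | insert a s _ ih =>
    have : {z : X | ∃ x ∈ insert a s, z ∈ f x} = f a ∪ {z : X | ∃ x ∈ s, z ∈ f x} := by
      ext; simp
    rw [this]
    exact lt_of_le_of_lt (Cardinal.mk_union_le _ _)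
      (Cardinal.add_lt_of_lt (Cardinal.aleph0_le_mk X) (hf a) ih)

theorem aux_small {T X : Type u} [Infinite X] (S : Set T) (hS : #S < #X)
    (g : S → Finset X) : #(⋃ s, (g s : Set X)) < #X := by
  rcases Set.finite_or_infinite S with h | h
  · have := h.to_subtype
    have h2 : (⋃ s, (g s : Set X)).Finite := Set.finite_iUnion (fun s => (g s).finite_toSet)
    exact lt_of_lt_of_le h2.lt_aleph0 (Cardinal.aleph0_le_mk X)
  · have := h.to_subtype
    refine lt_of_le_of_lt ?_ hS
    refine (Cardinal.mk_iUnion_le _).trans ?_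
    refine (mul_le_mul' le_rfl (b := #S) (c := ⨆ i, #(g i : Set X)) (d := ℵ₀) ?_).trans ?_
    · exact ciSup_le' (fun i => (Finset.finite_toSet (g i)).lt_aleph0.le)
    · rw [Cardinal.mul_aleph0_eq (Cardinal.aleph0_le_mk S)]

theorem aux_seq {X : Type u} [Semigroup X] [Infinite X]
    (h1 : ∀ F : Finset X,
      #{z : X | ∀ x ∈ F, ∀ y ∈ F, x ≠ y → x * z ≠ y * z} = #X)
    (h2 : ∀ P : Set X, #↥P < #X → ∀ x : X, #{z : X | x * z ∈ P} < #X) :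
    ∃ z : Finset X × Finset X → X, ∀ s t, ∀ x ∈ s.1, ∀ y ∈ t.1,
      x * z s = y * z t → s = t ∧ x = y := by
  classical
  have hT : #(Finset X × Finset X) = #X := by
    rw [Cardinal.mk_prod, Cardinal.lift_id, Cardinal.mk_finset_of_infinite,
      Cardinal.mul_eq_self (Cardinal.aleph0_le_mk X)]
  obtain ⟨r, wo, hr⟩ := Cardinal.ord_eq (Finset X × Finset X)
  have step : ∀ t (f : ∀ s, r s t → X), ∃ z : X,
      (∀ x ∈ t.1, ∀ y ∈ t.1, x ≠ y → x * z ≠ y * z) ∧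
      ∀ s (h : r s t), ∀ x ∈ s.1, ∀ y ∈ t.1, x * f s h ≠ y * z := by
    intro t f
    have hS : #{s | r s t} < #X := by
      rw [← hT]; exact Cardinal.card_typein_lt t hr
    have hP := aux_small {s | r s t} hS (fun s => s.1.1.image (fun x => x * f s.1 s.2))
    set P := ⋃ s : {s | r s t}, ((s.1.1.image (fun x => x * f s.1 s.2) : Finset X) : Set X)
      with hPdef
    have hU := aux_fin_union (fun x => {z : X | x * z ∈ P}) (h2 P hP) t.1
    by_contra hcon
    push Not at hcon
    rw [← h1 t.1] at hU
    refine absurd hU (not_lt.2 (Cardinal.mk_le_mk_of_subset ?_))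
    intro z hz
    obtain ⟨s, h, x, hx, y, hy, e⟩ := hcon z hz
    refine ⟨y, hy, ?_⟩
    show y * z ∈ P
    rw [hPdef]
    refine Set.mem_iUnion.2 ⟨⟨s, h⟩, ?_⟩
    rw [← e]
    exact Finset.mem_coe.2 (Finset.mem_image_of_mem _ hx)
  choose g hg1 hg2 using step
  have wf : WellFounded r := wo.wf
  let z := wf.fix g
  have hz : ∀ t, z t = g t (fun s _ => z s) := fun t => wf.fix_eq g t
  refine ⟨z, ?_⟩
  intro s t x hx y hy e
  rcases trichotomous_of r s t with h | h | h
  · rw [hz t] at e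
    exact absurd e (hg2 t (fun s _ => z s) s h x hx y hy)
  · subst h
    refine ⟨rfl, ?_⟩
    by_contra hne
    rw [hz s] at e
    exact hg1 s _ x hx y hy hne e
  · rw [hz s] at e
    exact absurd e.symm (hg2 s (fun s _ => z s) t h y hy x hx)

/-- For an infinite semigroup satisfying (1) and (2), the topological centre of the
semigroup of ultrafilters (with the Hindman--Strauss operation) is exactly the set of
principal ultrafilters. -/
theorem stmt5 {X : Type*} [Semigroup X] [Infinite X]
    (h1 : ∀ F : Finset X,
      #{z : X | ∀ x ∈ F, ∀ y ∈ F, x ≠ y → x * z ≠ y * z} = #X)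
    (h2 : ∀ P : Set X, #↥P < #X → ∀ x : X, #{z : X | x * z ∈ P} < #X)
    (mul : Ultrafilter X → Ultrafilter X → Ultrafilter X)
    (hmul : ∀ p q : Ultrafilter X, ∀ A : Set X,
      A ∈ mul p q ↔ {x : X | {y : X | x * y ∈ A} ∈ q} ∈ p)
    (p : Ultrafilter X) :
    Continuous (mul p) ↔ ∃ x : X, p = pure x := by
  classical
  constructor
  swap
  · rintro ⟨x, rfl⟩
    refine continuous_generateFrom_iff.2 ?_
    rintro _ ⟨A, rfl⟩
    have : mul (pure x) ⁻¹' {u | A ∈ u} = {q | {y | x * y ∈ A} ∈ q} := by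
      ext q
      simp only [Set.mem_preimage, Set.mem_setOf_eq, hmul, Ultrafilter.mem_pure]
    rw [this]
    exact ultrafilter_isOpen_basic _
  intro hc
  by_contra hnp
  have hns : ∀ x, {x} ∉ p := by
    intro x hx
    refine hnp ⟨x, ?_⟩
    refine Ultrafilter.coe_injective ?_
    refine (Ultrafilter.unique _ ?_)
    simpa using hx
  have cont : ∀ (A : Set X) (q : Ultrafilter X), {x | {y | x * y ∈ A} ∈ q} ∈ p →
      {y | {x | x * y ∈ A} ∈ p} ∈ q := by
    intro A q hA
    have ho : IsOpen (mul p ⁻¹' {u | A ∈ u}) := (ultrafilter_isOpen_basic A).preimage hc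
    have hq : q ∈ mul p ⁻¹' {u | A ∈ u} := (hmul p q A).2 hA
    obtain ⟨_, ⟨B, rfl⟩, hB1, hB2⟩ :=
      ultrafilterBasis_is_basis.exists_subset_of_mem_open hq ho
    refine Filter.mem_of_superset hB1 ?_
    intro y hy
    have : (pure y : Ultrafilter X) ∈ mul p ⁻¹' {u | A ∈ u} := hB2 (by simpa using hy)
    have := (hmul p _ A).1 this
    simpa using this
  obtain ⟨z, hz⟩ := aux_seq h1 h2
  let A : Set ((Finset X × Finset X) × X) → Set X :=
    fun L => {w | ∃ t, ∃ x ∈ t.1, (t, x) ∈ L ∧ w = x * z t}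
  have hA : ∀ L t x, x ∈ t.1 → (x * z t ∈ A L ↔ (t, x) ∈ L) := by
    intro L t x hx
    constructor
    · rintro ⟨s, y, hy, hL, e⟩
      obtain ⟨rfl, rfl⟩ := hz _ _ _ hx _ hy e
      exact hL
    · intro h
      exact ⟨t, x, hx, h, rfl⟩
  -- key consequence of continuity
  have key : ∀ (L : Set ((Finset X × Finset X) × X)) (q : Ultrafilter (Finset X × Finset X)),
      (∀ E : Finset X, {t : Finset X × Finset X | E ⊆ t.1} ∈ q) →
      {x | {t | (t, x) ∈ L} ∈ q} ∈ p → {t | {x | x * z t ∈ A L} ∈ p} ∈ q := by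
    intro L q hq hL
    have := cont (A L) (q.map z) (by
      refine Filter.mem_of_superset hL ?_
      intro x hx
      show z ⁻¹' _ ∈ q
      refine Filter.mem_of_superset (Filter.inter_mem hx (hq {x})) ?_
      rintro t ⟨ht1, ht2⟩
      exact (hA L t x (by simpa using ht2)).2 ht1)
    exact this
  have fine : ∀ K : Set (Finset X × Finset X), (∀ E : Finset X, ∃ t ∈ K, E ⊆ t.1) →
      ∃ q : Ultrafilter (Finset X × Finset X), K ∈ q ∧
        ∀ E : Finset X, {t : Finset X × Finset X | E ⊆ t.1} ∈ q := by
    intro K hK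
    let f : Filter (Finset X × Finset X) :=
      ⨅ E : Finset X, Filter.principal {t | t ∈ K ∧ E ⊆ t.1}
    have hne : f.NeBot := by
      refine Filter.iInf_neBot_of_directed' ?_ ?_
      · intro E E'
        refine ⟨E ∪ E', ?_, ?_⟩
        · exact Filter.principal_mono.2 fun t ht => ⟨ht.1, Finset.union_subset_left ht.2⟩
        · exact Filter.principal_mono.2 fun t ht => ⟨ht.1, Finset.union_subset_right ht.2⟩
      · intro E
        obtain ⟨t, ht⟩ := hK E
        exact Filter.principal_neBot_iff.2 ⟨t, ht⟩
    have hmem : ∀ E : Finset X, {t | t ∈ K ∧ E ⊆ t.1} ∈ Ultrafilter.of f := fun E =>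
      Ultrafilter.of_le f (Filter.mem_iInf_of_mem E (Filter.mem_principal_self _))
    exact ⟨Ultrafilter.of f, Filter.mem_of_superset (hmem ∅) fun t ht => ht.1,
      fun E => Filter.mem_of_superset (hmem E) fun t ht => ht.2⟩
  have star : ∀ K : Set (Finset X × Finset X), ∃ E : Finset X, ∀ t ∈ K, E ⊆ t.1 →
      {x | x * z t ∈ A {u | u.1 ∈ K}} ∈ p := by
    intro K
    by_contra hcon
    push Not at hcon
    obtain ⟨q, hq1, hq2⟩ := fine {t | t ∈ K ∧ {x | x * z t ∈ A {u | u.1 ∈ K}} ∉ p} (by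
      intro E
      obtain ⟨t, a, b, c⟩ := hcon E
      exact ⟨t, ⟨a, c⟩, b⟩)
    have hk := key {u | u.1 ∈ K} q hq2 (by
      refine Filter.mem_of_superset Filter.univ_mem ?_
      intro x _
      exact Filter.mem_of_superset hq1 fun t ht => ht.1)
    obtain ⟨t, ht1, ht2⟩ := Ultrafilter.nonempty_of_mem (Filter.inter_mem hq1 hk)
    exact ht1.2 ht2
  choose e he using star
  have diag : ∃ E : Finset X, ∀ t : Finset X × Finset X, t.2 = E →
      E ∪ e {t | t.2 = E} ⊆ t.1 → {x | x * z t ∈ A {u | u.1 = t}} ∈ p := by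
    by_contra hcon
    push Not at hcon
    choose τ hτ1 hτ2 hτ3 using hcon
    let E := e (Set.range τ)
    have a1 := he (Set.range τ) (τ E) ⟨E, rfl⟩ (Finset.union_subset_left (hτ2 E))
    have a2 := he {t | t.2 = E} (τ E) (hτ1 E) (Finset.union_subset_right (hτ2 E))
    refine hτ3 E (Filter.mem_of_superset (Filter.inter_mem a1 a2) ?_)
    rintro x ⟨⟨t, y, hy, ⟨E', hE'⟩, hw⟩, hx2⟩
    refine ⟨t, y, hy, ?_, hw⟩
    have hx2 : x * z (τ E) ∈ A {u | u.1 ∈ {t : Finset X × Finset X | t.2 = E}} := hx2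
    rw [hw, hA _ _ _ hy] at hx2
    have hx2 : t.2 = E := hx2
    have hE' : τ E' = t := hE'
    show t = τ E
    have := hτ1 E'
    rw [hE', hx2] at this
    rw [← hE', ← this]
  obtain ⟨E, hE⟩ := diag
  have hx : ∀ t : Finset X × Finset X, ∃ x : X, t.2 = E → E ∪ e {t | t.2 = E} ⊆ t.1 →
      x ∈ t.1 ∧ {y | y * z t = x * z t} ∈ p := by
    intro t
    by_cases h : t.2 = E ∧ E ∪ e {t | t.2 = E} ⊆ t.1
    · have h3 := hE t h.1 h.2
      have h4 : (⋃ x ∈ (t.1 : Set X), {y | y * z t = x * z t}) ∈ p := by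
        refine Filter.mem_of_superset h3 ?_
        rintro y ⟨s, x, hx, hs, hw⟩
        have hs : s = t := hs
        subst hs
        exact Set.mem_biUnion (Finset.mem_coe.2 hx) hw
      obtain ⟨x, hx1, hx2⟩ := (Ultrafilter.finite_biUnion_mem_iff t.1.finite_toSet).1 h4
      exact ⟨x, fun _ _ => ⟨hx1, hx2⟩⟩
    · obtain ⟨x⟩ : Nonempty X := inferInstance
      exact ⟨x, fun a b => absurd ⟨a, b⟩ h⟩
  choose ξ hξ using hx
  obtain ⟨q, hq1, hq2⟩ := fine {t | t.2 = E ∧ E ∪ e {t | t.2 = E} ⊆ t.1} (by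
    intro E'
    exact ⟨(E' ∪ (E ∪ e {t | t.2 = E}), E), ⟨rfl, Finset.subset_union_right⟩,
      Finset.subset_union_left⟩)
  have hk := key {u | u.2 ≠ ξ u.1} q hq2 (by
    by_cases h : ∃ y, {t | ξ t = y} ∈ q
    · obtain ⟨y, hy⟩ := h
      refine Filter.mem_of_superset (Ultrafilter.compl_mem_iff_notMem.2 (hns y)) ?_
      intro x hxy
      refine Filter.mem_of_superset hy ?_
      intro t ht hxt
      exact hxy (hxt.trans ht)
    · push Not at h
      refine Filter.mem_of_superset Filter.univ_mem ?_
      intro x _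
      refine Filter.mem_of_superset (Ultrafilter.compl_mem_iff_notMem.2 (h x)) ?_
      intro t ht hxt
      exact ht hxt.symm)
  obtain ⟨t, ht1, ht2⟩ := Ultrafilter.nonempty_of_mem (Filter.inter_mem hq1 hk)
  obtain ⟨b1, b2⟩ := hξ t ht1.1 ht1.2
  obtain ⟨y, hy1, hy2⟩ := Ultrafilter.nonempty_of_mem (Filter.inter_mem b2 ht2)
  have hy1 : y * z t = ξ t * z t := hy1
  have hy2 : y * z t ∈ A {u | u.2 ≠ ξ u.1} := hy2
  rw [hy1, hA _ _ _ b1] at hy2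
  exact hy2 rfl
end

section
/- Let X be an infinite semigroup satisfying properties (1) and (2). Let S ⊆ M(X) be closed under the convolution ⋆ (so S with ⋆ is a semigroup) and suppose K ⊆ S. Then the topological centre Λ(S) = {μ ∈ S | the mapping ν ↦ μ⋆ν from S to S is continuous for the weak* topology} equals the set of ℓ¹-representable elements of S. -/
open BoundedContinuousFunction NormedSpace

section ConvDefs

variable {X Y Z : Type*} [TopologicalSpace X] [DiscreteTopology X]
  [TopologicalSpace Y] [DiscreteTopology Y] [TopologicalSpace Z] [DiscreteTopology Z]

/-- The inner integral: `x ↦ ν (y ↦ f (p x y))`, as a bounded function on `X`. -/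
noncomputable def innerConv (p : X → Y → Z) (ν : StrongDual ℝ (Y →ᵇ ℝ)) (f : Z →ᵇ ℝ) : X →ᵇ ℝ :=
  BoundedContinuousFunction.ofNormedAddCommGroup
    (fun x => ν (f.compContinuous ⟨fun y => p x y, continuous_of_discreteTopology⟩))
    continuous_of_discreteTopology (‖ν‖ * ‖f‖)
    (fun x => by
      calc ‖ν (f.compContinuous ⟨fun y => p x y, continuous_of_discreteTopology⟩)‖
          ≤ ‖ν‖ * ‖f.compContinuous ⟨fun y => p x y, continuous_of_discreteTopology⟩‖ :=
            ν.le_opNorm _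
        _ ≤ ‖ν‖ * ‖f‖ := by
            gcongr
            exact f.norm_compContinuous_le _)

/-- The convolution `μ ⋆ ν` along the map `p`:
`(μ ⋆ ν) f = μ (x ↦ ν (y ↦ f (p x y)))`. -/
noncomputable def convMap (p : X → Y → Z) (μ : StrongDual ℝ (X →ᵇ ℝ)) (ν : StrongDual ℝ (Y →ᵇ ℝ)) :
    StrongDual ℝ (Z →ᵇ ℝ) :=
  LinearMap.mkContinuous
    { toFun := fun f => μ (innerConv p ν f)
      map_add' := fun f g => by
        rw [← map_add]
        refine congrArg μ ?_
        ext x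
        simp only [innerConv, coe_ofNormedAddCommGroup, coe_add, Pi.add_apply]
        exact map_add ν (f.compContinuous _) (g.compContinuous _)
      map_smul' := fun c f => by
        simp only [RingHom.id_apply]
        rw [← map_smul]
        refine congrArg μ ?_
        ext x
        simp only [innerConv, coe_ofNormedAddCommGroup, coe_smul, Pi.smul_apply]
        exact map_smul ν c (f.compContinuous _) }
    (‖μ‖ * ‖ν‖)
    (fun f => by
      calc ‖μ (innerConv p ν f)‖ ≤ ‖μ‖ * ‖innerConv p ν f‖ := μ.le_opNorm _
        _ ≤ ‖μ‖ * (‖ν‖ * ‖f‖) := by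
            gcongr
            exact norm_ofNormedAddCommGroup_le _
                (mul_nonneg (norm_nonneg ν) (norm_nonneg f)) _
        _ = ‖μ‖ * ‖ν‖ * ‖f‖ := by ring)

/-- `μ` is representable by an absolutely summable family (an element of `ℓ¹(X)`). -/
def L1Rep (μ : StrongDual ℝ (X →ᵇ ℝ)) : Prop :=
  ∃ g : X → ℝ, Summable (fun x => |g x|) ∧ ∀ f : X →ᵇ ℝ, μ f = ∑' x, g x * f x

/-- A functional is positive if it is nonnegative on nonnegative functions. -/
def PosFunc (μ : StrongDual ℝ (X →ᵇ ℝ)) : Prop :=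
  ∀ f : X →ᵇ ℝ, (∀ x, 0 ≤ f x) → 0 ≤ μ f

end ConvDefs

open Cardinal

open Filter Topology

/-- Right translation of a bounded function. -/
noncomputable def rtr {X : Type*} [Semigroup X] [TopologicalSpace X] [DiscreteTopology X]
    (z : X) (h : X →ᵇ ℝ) : X →ᵇ ℝ :=
  h.compContinuous ⟨fun x => x * z, continuous_of_discreteTopology⟩

/-- Left translation of a bounded function. -/
noncomputable def ltr {X : Type*} [Semigroup X] [TopologicalSpace X] [DiscreteTopology X]
    (x : X) (h : X →ᵇ ℝ) : X →ᵇ ℝ :=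
  h.compContinuous ⟨fun y => x * y, continuous_of_discreteTopology⟩

/-- Bounded function from explicit bound one. -/
noncomputable def mkB {X : Type*} [TopologicalSpace X] [DiscreteTopology X]
    (f : X → ℝ) (hf : ∀ x, |f x| ≤ 1) : X →ᵇ ℝ :=
  BoundedContinuousFunction.ofNormedAddCommGroup f continuous_of_discreteTopology 1 hf

open Classical in
/-- Indicator of a set. -/
noncomputable def indB {X : Type*} [TopologicalSpace X] [DiscreteTopology X] (A : Set X) : X →ᵇ ℝ :=
  mkB (fun x => if x ∈ A then 1 else 0) (fun x => by split_ifs <;> simp)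

section basics
set_option linter.unusedSectionVars false
variable {X : Type*} [Semigroup X] [TopologicalSpace X] [DiscreteTopology X]

@[simp] lemma rtr_apply (z : X) (h : X →ᵇ ℝ) (x : X) : rtr z h x = h (x * z) := rfl
@[simp] lemma ltr_apply (z : X) (h : X →ᵇ ℝ) (x : X) : ltr z h x = h (z * x) := rfl
@[simp] lemma mkB_apply (f : X → ℝ) (hf) (x : X) : mkB f hf x = f x := rfl
open Classical in
@[simp] lemma indB_apply (A : Set X) (x : X) : indB A x = if x ∈ A then 1 else 0 := rfl

lemma convMap_apply' (μ ν : StrongDual ℝ (X →ᵇ ℝ)) (f : X →ᵇ ℝ) :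
    convMap (· * ·) μ ν f = μ (innerConv (· * ·) ν f) := rfl

lemma innerConv_apply' (ν : StrongDual ℝ (X →ᵇ ℝ)) (f : X →ᵇ ℝ) (x : X) :
    innerConv (· * ·) ν f x = ν (ltr x f) := rfl

lemma norm_ltr_le (x : X) (f : X →ᵇ ℝ) : ‖ltr x f‖ ≤ ‖f‖ := f.norm_compContinuous_le _
lemma norm_rtr_le (x : X) (f : X →ᵇ ℝ) : ‖rtr x f‖ ≤ ‖f‖ := f.norm_compContinuous_le _

lemma norm_evalCLM_le' (x : X) : ‖(evalCLM ℝ x : StrongDual ℝ (X →ᵇ ℝ))‖ ≤ 1 := by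
  refine ContinuousLinearMap.opNorm_le_bound _ zero_le_one (fun g => ?_)
  rw [one_mul]
  exact g.norm_coe_le_norm x

/-- The abstract continuity property used in the argument. -/
def CtP (μ : StrongDual ℝ (X →ᵇ ℝ)) : Prop :=
  ∀ (U : Ultrafilter (Finset X)) (z : Finset X → X) (f h : X →ᵇ ℝ),
    (∀ x, Tendsto (fun l => h (x * z l)) U (𝓝 (f x))) →
    Tendsto (fun l => μ (rtr (z l) h)) U (𝓝 (μ f))

lemma CtP.sub {μ ν : StrongDual ℝ (X →ᵇ ℝ)} (hμ : CtP μ) (hν : CtP ν) : CtP (μ - ν) := by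
  intro U z f h H
  exact (hμ U z f h H).sub (hν U z f h H)

lemma ctP_of_continuousOn (μ : StrongDual ℝ (X →ᵇ ℝ)) (S : Set (StrongDual ℝ (X →ᵇ ℝ)))
    (hKS : {μ : StrongDual ℝ (X →ᵇ ℝ) |
      StrongDual.toWeakDual μ ∈ closure (Set.range fun x : X => StrongDual.toWeakDual (evalCLM ℝ x))} ⊆ S)
    (hc : ContinuousOn
      (fun ν : WeakDual ℝ (X →ᵇ ℝ) =>
        StrongDual.toWeakDual (convMap (· * ·) μ (WeakDual.toStrongDual ν)))
      ((fun μ : StrongDual ℝ (X →ᵇ ℝ) => StrongDual.toWeakDual μ) '' S)) : CtP μ := by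
  intro U z f h H
  have hcomp := WeakDual.isCompact_closedBall (0 : StrongDual ℝ (X →ᵇ ℝ)) 1
  let d : X → WeakDual ℝ (X →ᵇ ℝ) := fun x => StrongDual.toWeakDual (evalCLM ℝ x)
  have hd : ∀ x, d x ∈ WeakDual.toStrongDual ⁻¹' Metric.closedBall (0 : StrongDual ℝ (X →ᵇ ℝ)) 1 := by
    intro x
    have : (evalCLM ℝ x : StrongDual ℝ (X →ᵇ ℝ)) ∈ Metric.closedBall (0 : StrongDual ℝ (X →ᵇ ℝ)) 1 := by
      refine ContinuousLinearMap.opNorm_le_bound _ zero_le_one (fun g => ?_)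
      change ‖-(g x) + 0‖ ≤ _
      rw [add_zero, norm_neg, one_mul]
      exact g.norm_coe_le_norm x
    exact this
  obtain ⟨ν, -, hν⟩ := isCompact_iff_ultrafilter_le_nhds.1 hcomp (U.map (fun l => d (z l)))
    (by
      rw [le_principal_iff]
      exact Ultrafilter.mem_map.2 (Filter.univ_mem' (fun l => hd (z l))))
  have hν' : Tendsto (fun l => d (z l)) U (𝓝 ν) := hν
  have hmem : ∀ l, d (z l) ∈ ((fun μ : StrongDual ℝ (X →ᵇ ℝ) => StrongDual.toWeakDual μ) '' S) :=
    fun l => by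
      have : d (z l) ∈ closure (Set.range d) := subset_closure ⟨z l, rfl⟩
      exact ⟨WeakDual.toStrongDual (d (z l)), hKS this, rfl⟩
  have hνm : ν ∈ ((fun μ : StrongDual ℝ (X →ᵇ ℝ) => StrongDual.toWeakDual μ) '' S) :=
by
    have : ν ∈ closure (Set.range d) := mem_closure_of_tendsto hν'
      (Filter.Eventually.of_forall fun l => ⟨z l, rfl⟩)
    exact ⟨WeakDual.toStrongDual ν, hKS this, rfl⟩
  have h1 := (hc ν hνm).tendsto.comp (tendsto_nhdsWithin_iff.2 ⟨hν', Filter.Eventually.of_forall hmem⟩)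
  have h2 := ((WeakDual.eval_continuous h).tendsto _).comp h1
  have h3 : ∀ g : X →ᵇ ℝ, Tendsto (fun l => g (z l)) U (𝓝 (ν g)) := fun g =>
    ((WeakDual.eval_continuous g).tendsto _).comp hν'
  have h4 : innerConv (· * ·) (WeakDual.toStrongDual ν) h = f := by
    ext x
    exact tendsto_nhds_unique (h3 (ltr x h)) (H x)
  rw [← h4]
  exact h2

lemma continuous_of_L1Rep (μ : StrongDual ℝ (X →ᵇ ℝ)) (h : L1Rep μ) : Continuous
      (fun ν : WeakDual ℝ (X →ᵇ ℝ) =>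
        StrongDual.toWeakDual (convMap (· * ·) μ (WeakDual.toStrongDual ν))) := by
  obtain ⟨g, hg, hμ⟩ := h
  refine WeakDual.continuous_of_continuous_eval (fun f => ?_)
  have hs : Summable (fun x => g x • ltr x f) := by
    refine Summable.of_norm_bounded (g := fun x => |g x| * ‖f‖) (hg.mul_right _) (fun x => ?_)
    rw [norm_smul, Real.norm_eq_abs]
    exact mul_le_mul_of_nonneg_left (norm_ltr_le x f) (abs_nonneg _)
  have : ∀ ν : WeakDual ℝ (X →ᵇ ℝ),
      (StrongDual.toWeakDual (convMap (· * ·) μ (WeakDual.toStrongDual ν))) f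
        = ν (∑' x, g x • ltr x f) := by
    intro ν
    have e1 : (StrongDual.toWeakDual (convMap (· * ·) μ (WeakDual.toStrongDual ν))) f
      = μ (innerConv (· * ·) (WeakDual.toStrongDual ν) f) := rfl
    have e2 := (WeakDual.toStrongDual ν).map_tsum hs
    have e3 : ν (∑' x, g x • ltr x f) = ∑' x, (WeakDual.toStrongDual ν) (g x • ltr x f) := e2
    rw [e1, hμ, e3]
    refine tsum_congr (fun x => ?_)
    rw [innerConv_apply', map_smul, smul_eq_mul]
  simp_rw [this]
  exact WeakDual.eval_continuous _

lemma exists_L1_part (μ : StrongDual ℝ (X →ᵇ ℝ)) :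
    ∃ ρ : StrongDual ℝ (X →ᵇ ℝ), L1Rep ρ ∧ ∀ x, ρ (indB {x}) = μ (indB {x}) := by
  classical
  have hs : Summable (fun x => |μ (indB {x})|) := by
    refine summable_of_sum_le (c := ‖μ‖) (fun _ => abs_nonneg _) (fun B => ?_)
    let q : X →ᵇ ℝ := ∑ x ∈ B, (SignType.sign (μ (indB {x})) : ℝ) • indB {x}
    have hq : ∀ y, q y = if y ∈ B then (SignType.sign (μ (indB {y})) : ℝ) else 0 := by
      intro y
      simp [q, BoundedContinuousFunction.coe_sum]
    have hn : ‖q‖ ≤ 1 := by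
      refine (BoundedContinuousFunction.norm_le zero_le_one).2 (fun y => ?_)
      rw [hq]
      split_ifs
      · rcases SignType.sign (μ (indB {y})) with _ | _ | _ <;> simp
      · simp
    have : μ q = ∑ x ∈ B, |μ (indB {x})| := by
      simp only [q, map_sum, map_smul, smul_eq_mul, sign_mul_self]
    rw [← this]
    calc μ q ≤ ‖μ q‖ := le_abs_self _
      _ ≤ ‖μ‖ * ‖q‖ := μ.le_opNorm _
      _ ≤ ‖μ‖ * 1 := by gcongr
      _ = ‖μ‖ := mul_one _
  have hs2 : ∀ f : X →ᵇ ℝ, Summable (fun x => |μ (indB {x}) * f x|) := by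
    intro f
    refine Summable.of_nonneg_of_le (fun _ => abs_nonneg _) (fun x => ?_) (hs.mul_right ‖f‖)
    rw [abs_mul]
    exact mul_le_mul_of_nonneg_left (f.norm_coe_le_norm x) (abs_nonneg _)
  let ρ : StrongDual ℝ (X →ᵇ ℝ) := LinearMap.mkContinuous
    { toFun := fun f => ∑' x, μ (indB {x}) * f x
      map_add' := fun f g => by
        rw [← (hs2 f).of_abs.tsum_add (hs2 g).of_abs]
        exact tsum_congr fun x => by simp [mul_add]
      map_smul' := fun c f => by
        simp only [RingHom.id_apply, smul_eq_mul]
        rw [← tsum_mul_left]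
        exact tsum_congr fun x => by
          simp only [BoundedContinuousFunction.coe_smul, smul_eq_mul]
          ring }
    (∑' x, |μ (indB {x})|) (fun f => by
      have h1 : ‖∑' x, μ (indB {x}) * f x‖ ≤ ∑' x, |μ (indB {x}) * f x| :=
        norm_tsum_le_tsum_norm (hs2 f)
      refine h1.trans ?_
      rw [← tsum_mul_right]
      refine (hs2 f).tsum_le_tsum (fun x => ?_) (hs.mul_right _)
      rw [abs_mul]
      exact mul_le_mul_of_nonneg_left (f.norm_coe_le_norm x) (abs_nonneg _))
  have key : ∀ f : X →ᵇ ℝ, ρ f = ∑' x, μ (indB {x}) * f x := fun f => rfl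
  refine ⟨ρ, ⟨_, hs, key⟩, fun x => ?_⟩
  rw [key, tsum_eq_single x]
  · simp
  · intro y hy
    simp [hy]

end basics

universe u

section comb

/-- Rosenthal-type extraction. -/
lemma rosenthal {L : Type*} (v : List L → Set (List L) → ℝ)
    (vmono : ∀ i A B, A ⊆ B → v i A ≤ v i B)
    (vadd : ∀ i A B, Disjoint A B → v i A + v i B ≤ v i (A ∪ B))
    (ε : ℝ) (n : ℕ) :
    ∀ φ : List L → List L, Function.Injective φ → (∀ t, t ⊆ φ t) →
      (∀ t, v (φ t) (φ '' {t}ᶜ) ≤ (n + 1) * ε) →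
      ∃ s : L → List L, Function.Injective s ∧ (∀ l, l ∈ s l) ∧
        ∀ l, v (s l) (s '' {l}ᶜ) ≤ ε := by
  induction n with
  | zero =>
    intro φ hφ hsub hv
    refine ⟨fun l => φ [l], fun a b h => by simpa using hφ h, fun l => hsub _ (by simp), fun l => ?_⟩
    refine (vmono _ _ _ ?_).trans ((hv [l]).trans (by simp))
    rintro _ ⟨m, hm, rfl⟩
    exact ⟨[m], by simpa using hm, rfl⟩
  | succ n ih =>
    intro φ hφ hsub hv
    by_cases hgood : ∃ t, ∀ l, v (φ (l :: t)) ((fun l => φ (l :: t)) '' {l}ᶜ) ≤ ε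
    · obtain ⟨t, ht⟩ := hgood
      exact ⟨fun l => φ (l :: t), fun a b h => by simpa using hφ h,
        fun l => hsub _ (by simp), ht⟩
    · push Not at hgood
      choose l hl using hgood
      refine ih (fun t => φ (l t :: t)) (fun a b h => ?_) (fun t x hx => hsub _ (by simp [hx]))
        (fun t => ?_)
      · have := hφ h
        simp only [List.cons.injEq] at this
        exact this.2
      · have hdis : Disjoint ((fun t => φ (l t :: t)) '' {t}ᶜ) ((fun m => φ (m :: t)) '' {l t}ᶜ) := by
          rw [Set.disjoint_left]
          rintro _ ⟨t', ht', rfl⟩ ⟨m, hm, h⟩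
          have := hφ h
          simp only [List.cons.injEq] at this
          exact ht' this.2.symm
        have h1 := vadd (φ (l t :: t)) _ _ hdis
        have h2 := vmono (φ (l t :: t)) (((fun t => φ (l t :: t)) '' {t}ᶜ) ∪ ((fun m => φ (m :: t)) '' {l t}ᶜ))
          (φ '' {l t :: t}ᶜ) (by
            rintro _ (⟨t', ht', rfl⟩ | ⟨m, hm, rfl⟩)
            · refine ⟨_, ?_, rfl⟩
              intro h
              simp only [Set.mem_singleton_iff, List.cons.injEq] at h
              exact ht' h.2
            · refine ⟨_, ?_, rfl⟩
              intro h
              simp only [Set.mem_singleton_iff, List.cons.injEq] at h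
              exact hm h.1)
        have h3 := hv (l t :: t)
        have h4 := hl t
        push_cast at h3

        linarith

lemma select {I X : Type u} [Infinite X] (hI : #I ≤ #X) (Q : I → Set X) (E : I → X → Finset X)
    (H : ∀ i, ∀ P : Set X, #P < #X → ∃ z ∈ Q i, Disjoint (E i z : Set X) P) :
    ∃ z : I → X, (∀ i, z i ∈ Q i) ∧ ∀ i j, i ≠ j → Disjoint (E i (z i) : Set X) (E j (z j)) := by
  obtain ⟨r, wo, hr⟩ := Cardinal.exists_ord_eq I
  have hsmall : ∀ (i : I) (z : {j // r j i} → X), #(⋃ j : {j // r j i}, (E j.1 (z j) : Set X) : Set X) < #X := by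
    intro i z
    have hlt : #{j // r j i} < #X := by
      refine lt_of_lt_of_le ?_ hI
      have := Ordinal.typein_lt_type r i
      rw [← hr, Cardinal.lt_ord] at this
      simpa using this
    rcases lt_or_ge #{j // r j i} ℵ₀ with hf | hinf
    · have : Finite {j // r j i} := Cardinal.lt_aleph0_iff_finite.1 hf
      have h2 : (⋃ j : {j // r j i}, (E j.1 (z j) : Set X)).Finite :=
        Set.finite_iUnion (fun j => Finset.finite_toSet _)
      exact lt_of_lt_of_le h2.lt_aleph0 (Cardinal.aleph0_le_mk X)
    · refine lt_of_le_of_lt (Cardinal.mk_iUnion_le_sum_mk.trans ?_) hlt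
      calc Cardinal.sum (fun j : {j // r j i} => #(E j.1 (z j) : Set X)) 
          ≤ Cardinal.sum (fun j : {j // r j i} => ℵ₀) := 
            Cardinal.sum_le_sum _ _ (fun j => (Finset.finite_toSet _).lt_aleph0.le)
        _ = #{j // r j i} := by
            rw [Cardinal.sum_const']
            exact Cardinal.mul_aleph0_eq hinf
  choose pick hp1 hp2 using H
  have hwf : WellFounded r := wo.wf
  let z : I → X := hwf.fix (fun i rec => pick i _ (hsmall i (fun j => rec j.1 j.2)))
  have hz : ∀ i, z i = pick i _ (hsmall i (fun j => z j.1)) := fun i => hwf.fix_eq _ i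
  have hlt : ∀ i j, r j i → Disjoint (E i (z i) : Set X) (E j (z j)) := by
    intro i j hji
    have := hp2 i _ (hsmall i (fun j => z j.1))
    rw [← hz] at this
    exact this.mono_right (Set.subset_iUnion (fun j : {j // r j i} => (E j.1 (z j.1) : Set X)) ⟨j, hji⟩)
  refine ⟨z, fun i => by rw [hz]; exact hp1 _ _ _, fun i j hij => ?_⟩
  rcases trichotomous_of r i j with h | h | h
  · exact (hlt j i h).symm
  · exact absurd h hij
  · exact hlt i j h

end comb

section main
variable {X : Type u} [Semigroup X] [TopologicalSpace X] [DiscreteTopology X]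

/-- Elements separating a finite set. -/
def sepS (F : Finset X) : Set X := {z : X | ∀ x ∈ F, ∀ y ∈ F, x ≠ y → x * z ≠ y * z}

/-- Weight of the right-translation fibre. -/
noncomputable def wgt (μ : StrongDual ℝ (X →ᵇ ℝ)) (z x : X) : ℝ := μ (indB {x' | x' * z = x * z})

/-- Values on functions supported in `D`. -/
def vset (μ : StrongDual ℝ (X →ᵇ ℝ)) (z : X) (D : Set X) : Set ℝ :=
  {r | ∃ g : X →ᵇ ℝ, ‖g‖ ≤ 1 ∧ (∀ y, y ∉ D → g y = 0) ∧ r = μ (rtr z g)}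

/-- Variation of the translate of `μ` on `D`. -/
noncomputable def vfun (μ : StrongDual ℝ (X →ᵇ ℝ)) (z : X) (D : Set X) : ℝ := sSup (vset μ z D)

lemma vset_le (μ : StrongDual ℝ (X →ᵇ ℝ)) (z : X) (D : Set X) : ∀ r ∈ vset μ z D, r ≤ ‖μ‖ := by
  rintro _ ⟨g, hg, -, rfl⟩
  calc μ (rtr z g) ≤ ‖μ (rtr z g)‖ := le_abs_self _
    _ ≤ ‖μ‖ * ‖rtr z g‖ := μ.le_opNorm _
    _ ≤ ‖μ‖ * 1 := by
      gcongr
      exact (norm_rtr_le z g).trans hg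
    _ = ‖μ‖ := mul_one _

lemma vset_bdd (μ : StrongDual ℝ (X →ᵇ ℝ)) (z : X) (D : Set X) : BddAbove (vset μ z D) :=
  ⟨‖μ‖, vset_le μ z D⟩

lemma vset_ne (μ : StrongDual ℝ (X →ᵇ ℝ)) (z : X) (D : Set X) : (vset μ z D).Nonempty :=
  ⟨_, 0, by simp, fun _ _ => rfl, rfl⟩

lemma vfun_le (μ : StrongDual ℝ (X →ᵇ ℝ)) (z : X) (D : Set X) : vfun μ z D ≤ ‖μ‖ :=
  csSup_le (vset_ne μ z D) (vset_le μ z D)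

lemma vfun_mono (μ : StrongDual ℝ (X →ᵇ ℝ)) (z : X) {D D' : Set X} (h : D ⊆ D') :
    vfun μ z D ≤ vfun μ z D' := by
  refine csSup_le_csSup (vset_bdd μ z D') (vset_ne μ z D) ?_
  rintro _ ⟨g, hg, h0, rfl⟩
  exact ⟨g, hg, fun y hy => h0 y (fun h' => hy (h h')), rfl⟩

lemma rtr_add (z : X) (f g : X →ᵇ ℝ) : rtr z (f + g) = rtr z f + rtr z g := rfl

lemma vfun_add (μ : StrongDual ℝ (X →ᵇ ℝ)) (z : X) {D D' : Set X} (h : Disjoint D D') :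
    vfun μ z D + vfun μ z D' ≤ vfun μ z (D ∪ D') := by
  have key : ∀ a ∈ vset μ z D, ∀ b ∈ vset μ z D', a + b ≤ vfun μ z (D ∪ D') := by
    rintro _ ⟨f, hf, hf0, rfl⟩ _ ⟨g, hg, hg0, rfl⟩
    refine le_csSup (vset_bdd μ z _) ⟨f + g, ?_, ?_, ?_⟩
    · refine (BoundedContinuousFunction.norm_le zero_le_one).2 (fun y => ?_)
      rw [BoundedContinuousFunction.add_apply]
      by_cases hy : y ∈ D
      · rw [hg0 y (Set.disjoint_left.1 h hy), add_zero]
        exact (f.norm_coe_le_norm y).trans hf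
      · rw [hf0 y hy, zero_add]
        exact (g.norm_coe_le_norm y).trans hg
    · intro y hy
      rw [BoundedContinuousFunction.add_apply, hf0 y (fun h => hy (Or.inl h)),
        hg0 y (fun h => hy (Or.inr h)), add_zero]
    · rw [rtr_add, map_add]
  have h1 : ∀ b ∈ vset μ z D', vfun μ z D ≤ vfun μ z (D ∪ D') - b := fun b hb =>
    csSup_le (vset_ne μ z D) (fun a ha => by linarith [key a ha b hb])
  have h2 : vfun μ z D' ≤ vfun μ z (D ∪ D') - vfun μ z D :=
    csSup_le (vset_ne μ z D') (fun b hb => by linarith [h1 b hb])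
  linarith

lemma abs_le_vfun (μ : StrongDual ℝ (X →ᵇ ℝ)) (z : X) (D : Set X) (g : X →ᵇ ℝ) (hg : ‖g‖ ≤ 1)
    (h0 : ∀ y, y ∉ D → g y = 0) : |μ (rtr z g)| ≤ vfun μ z D := by
  refine abs_le'.2 ⟨le_csSup (vset_bdd μ z D) ⟨g, hg, h0, rfl⟩,
    le_csSup (vset_bdd μ z D) ⟨-g, by rwa [norm_neg], fun y hy => ?_, ?_⟩⟩
  · rw [BoundedContinuousFunction.neg_apply, h0 y hy, neg_zero]
  · rw [← map_neg]; rfl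

lemma card_small_biUnion [Infinite X] (F : Finset X) (B : X → Set X) (hB : ∀ x ∈ F, #(B x) < #X) :
    #{z | ∃ x ∈ F, z ∈ B x} < #X := by
  classical
  induction F using Finset.induction_on with
  | empty => simpa using (Cardinal.aleph0_pos.trans_le (Cardinal.aleph0_le_mk X))
  | insert a F ha ih =>
    have e : {z | ∃ x ∈ insert a F, z ∈ B x} = B a ∪ {z | ∃ x ∈ F, z ∈ B x} := by
      ext z; simp
    rw [e]
    refine (Cardinal.mk_union_le _ _).trans_lt ?_
    exact Cardinal.add_lt_of_lt (Cardinal.aleph0_le_mk X) (hB a (by simp))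
      (ih (fun x hx => hB x (by simp [hx])))

lemma big_diff [Infinite X] (A B : Set X) (hA : #A = #X) (hB : #B < #X) : #(A \ B : Set X) = #X := by
  refine le_antisymm (Cardinal.mk_set_le _) ?_
  by_contra hlt
  push Not at hlt
  have : #A < #X := by
    refine lt_of_le_of_lt ((Cardinal.mk_le_mk_of_subset (t := (A \ B) ∪ B) ?_).trans
      (Cardinal.mk_union_le _ _)) (Cardinal.add_lt_of_lt (Cardinal.aleph0_le_mk X) hlt hB)
    intro x hx
    by_cases h : x ∈ B
    · exact Or.inr h
    · exact Or.inl ⟨hx, h⟩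
  exact this.ne hA

lemma mainM [Infinite X]
    (h2 : ∀ P : Set X, #↥P < #X → ∀ x : X, #{z : X | x * z ∈ P} < #X)
    (Z : Finset X → Set X) (hZs : ∀ F, Z F ⊆ sepS F) (hZ : ∀ F, #(Z F) = #X)
    (μ : StrongDual ℝ (X →ᵇ ℝ)) (hμ : CtP μ) (f : X →ᵇ ℝ) (hf : ‖f‖ ≤ 1) (F0 : Finset X)
    (ε : ℝ) (hε : 0 < ε) :
    ∃ F, F0 ⊆ F ∧ ∃ z ∈ Z F, |∑ x ∈ F, wgt μ z x * f x - μ f| ≤ ε := by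
  classical
  let Fi : List (Finset X) → Finset X := fun l => l.toFinset.biUnion id
  have hFi : ∀ l (a : Finset X), a ∈ l → a ⊆ Fi l := fun l a ha =>
    Finset.subset_biUnion_of_mem id (List.mem_toFinset.2 ha)
  obtain ⟨z, hzQ, hzd⟩ := select (I := List (Finset X)) (X := X)
    (by rw [Cardinal.mk_list_eq_mk, Cardinal.mk_finset_of_infinite])
    (fun i => Z (Fi i)) (fun i z => (Fi i).image (· * z)) (by
      intro i P hP
      have hs := card_small_biUnion (Fi i) (fun x => {z : X | x * z ∈ P}) (fun x _ => h2 P hP x)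
      have hb := big_diff _ _ (hZ (Fi i)) hs
      have hne : (Z (Fi i) \ {z | ∃ x ∈ Fi i, z ∈ {z : X | x * z ∈ P}} : Set X).Nonempty := by
        rw [← Set.nonempty_coe_sort, ← Cardinal.mk_ne_zero_iff, hb]
        exact Cardinal.mk_ne_zero X
      obtain ⟨z, hz1, hz2⟩ := hne
      refine ⟨z, hz1, Set.disjoint_left.2 ?_⟩
      intro y hy hyP
      simp only [Finset.coe_image, Set.mem_image, Finset.mem_coe] at hy
      obtain ⟨x, hx, rfl⟩ := hy
      exact hz2 ⟨x, hx, hyP⟩)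
  let E : List (Finset X) → Set X := fun i => ((Fi i).image (· * z i) : Finset X)
  have hE : ∀ i y, y ∈ E i ↔ ∃ x ∈ Fi i, x * z i = y := by
    intro i y
    simp [E]
  have hEd : ∀ i j, i ≠ j → Disjoint (E i) (E j) := hzd
  obtain ⟨n, hn⟩ := exists_nat_ge (‖μ‖ / (ε / 2))
  have hε2 : 0 < ε / 2 := by linarith
  obtain ⟨s, hsinj, hsm, hsv⟩ := rosenthal (fun i A => vfun μ (z i) (⋃ j ∈ A, E j))
    (fun i A B h => vfun_mono μ _ (Set.biUnion_subset_biUnion_left h))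
    (fun i A B h => by
      have := vfun_add μ (z i) (D := ⋃ j ∈ A, E j) (D' := ⋃ j ∈ B, E j) (by
        simp only [Set.disjoint_iUnion_left, Set.disjoint_iUnion_right]
        intro a ha b hb
        refine hEd _ _ ?_
        rintro rfl
        exact Set.disjoint_left.1 h (by assumption) (by assumption))
      simp only [Set.biUnion_union]
      exact this)
    (ε / 2) n id Function.injective_id (fun t => List.Subset.refl _) (fun t => by
      refine (vfun_le μ _ _).trans ?_
      rw [div_le_iff₀ hε2] at hn
      nlinarith)
  have huniq : ∀ l l' x x', x ∈ Fi (s l) → x' ∈ Fi (s l') → x * z (s l) = x' * z (s l') → x = x' := by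
    intro l l' x x' hx hx' h
    by_cases hl : l = l'
    · subst hl
      by_contra hne
      exact hZs _ (hzQ (s l)) x hx x' hx' hne h
    · exact absurd ((hE _ _).2 ⟨x', hx', h.symm⟩)
        (Set.disjoint_left.1 (hEd _ _ (fun h => hl (hsinj h))) ((hE _ _).2 ⟨x, hx, rfl⟩))
  let hfun : X → ℝ := fun y => if H : ∃ x, ∃ l, x ∈ Fi (s l) ∧ x * z (s l) = y then f H.choose else 0
  have hval : ∀ l x, x ∈ Fi (s l) → hfun (x * z (s l)) = f x := by
    intro l x hx
    have H : ∃ x', ∃ l', x' ∈ Fi (s l') ∧ x' * z (s l') = x * z (s l) := ⟨x, l, hx, rfl⟩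
    have e : hfun (x * z (s l)) = f H.choose := dif_pos H
    obtain ⟨l', hl', he⟩ := H.choose_spec
    rw [e, huniq l' l _ x hl' hx he]
  have hzero : ∀ y, (¬ ∃ x, ∃ l, x ∈ Fi (s l) ∧ x * z (s l) = y) → hfun y = 0 := fun y hy => dif_neg hy
  have hbd : ∀ y, |hfun y| ≤ 1 := by
    intro y
    by_cases H : ∃ x, ∃ l, x ∈ Fi (s l) ∧ x * z (s l) = y
    · have e : hfun y = f H.choose := dif_pos H
      rw [e]
      exact (f.norm_coe_le_norm _).trans hf
    · rw [hzero y H]; simp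
  let U : Ultrafilter (Finset X) := Ultrafilter.of atTop
  have hU : (U : Filter (Finset X)) ≤ atTop := Ultrafilter.of_le _
  have hlF : ∀ l, l ⊆ Fi (s l) := fun l => hFi _ _ (hsm l)
  have hT := hμ U (fun l => z (s l)) f (mkB hfun hbd) (fun x => by
    refine tendsto_const_nhds.congr' ?_
    refine ((eventually_ge_atTop {x}).filter_mono hU).mono ?_
    intro l hl
    exact (hval l x (hlF l (hl (by simp)))).symm)
  have hev := hT.eventually (Metric.ball_mem_nhds _ hε2)
  obtain ⟨l, hl1, hl2⟩ := (hev.and ((eventually_ge_atTop F0).filter_mono hU)).exists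
  refine ⟨Fi (s l), hl2.trans (hlF l), z (s l), hzQ _, ?_⟩
  have hb2 : ∀ y, |if y ∈ E (s l) then 0 else hfun y| ≤ 1 := by
    intro y
    split_ifs
    · simp
    · exact hbd y
  have hdec : rtr (z (s l)) (mkB hfun hbd) =
      (∑ x ∈ Fi (s l), f x • indB {x' | x' * z (s l) = x * z (s l)}) +
        rtr (z (s l)) (mkB (fun y => if y ∈ E (s l) then 0 else hfun y) hb2) := by
    ext x'
    rw [BoundedContinuousFunction.add_apply, BoundedContinuousFunction.coe_sum, Finset.sum_apply]
    simp only [rtr_apply, mkB_apply, BoundedContinuousFunction.coe_smul, indB_apply, Set.mem_ofPred_eq,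
      smul_eq_mul]
    by_cases hx' : x' * z (s l) ∈ E (s l)
    · rw [if_pos hx', add_zero]
      obtain ⟨x, hx, he⟩ := (hE _ _).1 hx'
      have hv : hfun (x' * z (s l)) = f x := by rw [← he, hval l x hx]
      rw [hv, Finset.sum_eq_single x]
      · rw [if_pos he.symm, mul_one]
      · intro b hb hbx
        rw [if_neg, mul_zero]
        intro h
        exact hbx (huniq l l b x hb hx (h.symm.trans he.symm))
      · intro h; exact absurd hx h
    · rw [if_neg hx', Finset.sum_eq_zero, zero_add]
      intro x hx
      rw [if_neg, mul_zero]
      intro h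
      exact hx' ((hE _ _).2 ⟨x, hx, h.symm⟩)
  have hsmall := abs_le_vfun μ (z (s l)) (⋃ j ∈ s '' {l}ᶜ, E j)
    (mkB (fun y => if y ∈ E (s l) then 0 else hfun y) hb2)
    ((BoundedContinuousFunction.norm_le zero_le_one).2 hb2) (by
      intro y hy
      rw [mkB_apply]
      split_ifs with h
      · rfl
      · refine hzero y ?_
        rintro ⟨x, m, hx, he⟩
        by_cases hm : m = l
        · subst hm
          exact h ((hE _ _).2 ⟨x, hx, he⟩)
        · refine hy ?_
          simp only [Set.mem_iUnion]
          exact ⟨s m, ⟨m, hm, rfl⟩, (hE _ _).2 ⟨x, hx, he⟩⟩)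
  have h5 := hsv l
  have h6 : |μ (rtr (z (s l)) (mkB hfun hbd)) - μ f| < ε / 2 := by
    have := hl1
    rwa [Real.dist_eq] at this
  have h7 : μ (rtr (z (s l)) (mkB hfun hbd)) = ∑ x ∈ Fi (s l), wgt μ (z (s l)) x * f x +
      μ (rtr (z (s l)) (mkB (fun y => if y ∈ E (s l) then 0 else hfun y) hb2)) := by
    rw [hdec, map_add, map_sum]
    congr 1
    refine Finset.sum_congr rfl (fun x _ => ?_)
    rw [map_smul, smul_eq_mul, mul_comm]
    rfl
  rw [h7] at h6
  have h8 := hsmall.trans h5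
  rw [abs_le] at h8 ⊢
  rw [abs_lt] at h6
  constructor <;> linarith

lemma singular_zero [Infinite X] (h1 : ∀ F : Finset X, #(sepS F) = #X)
    (h2 : ∀ P : Set X, #↥P < #X → ∀ x : X, #{z : X | x * z ∈ P} < #X)
    (μ : StrongDual ℝ (X →ᵇ ℝ)) (hμ : CtP μ) (h0 : ∀ x, μ (indB {x}) = 0) 
    (f : X →ᵇ ℝ) (hf : ‖f‖ ≤ 1) : μ f = 0 := by
  classical
  have hsepmono : ∀ F G : Finset X, F ⊆ G → sepS G ⊆ sepS F := fun F G h z hz x hx y hy =>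
    hz x (h hx) y (h hy)
  have claim : ∀ (δ : ℝ), 0 < δ → ∀ x : X, ∃ F : Finset X, #{z | z ∈ sepS F ∧ δ < |wgt μ z x|} < #X := by
    intro δ hδ x
    by_contra hcon
    push Not at hcon
    obtain ⟨F, hF, z, hz, hle⟩ := mainM h2 (fun F => {z | z ∈ sepS F ∧ δ < |wgt μ z x|})
      (fun F z hz => hz.1) (fun F => le_antisymm (Cardinal.mk_set_le _) (hcon F)) μ hμ (indB {x})
      ((BoundedContinuousFunction.norm_le zero_le_one).2 (fun y => by
        rw [indB_apply]; split_ifs <;> simp)) {x} (δ / 2) (by linarith)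
    have hxF : x ∈ F := hF (by simp)
    rw [h0, sub_zero, Finset.sum_eq_single x] at hle
    · have := hz.2
      simp only [indB_apply, Set.mem_singleton_iff, if_true, mul_one] at hle
      linarith
    · intro b _ hb
      simp [hb]
    · intro h; exact absurd hxF h
  have claim2 : ∀ (δ : ℝ), 0 < δ → ∀ G : Finset X,
      #{z | z ∈ sepS G ∧ ∀ x ∈ G, |wgt μ z x| ≤ δ} = #X := by
    intro δ hδ G
    choose Fx hFx using claim δ hδ
    have hs := card_small_biUnion G _ (fun x _ => hFx x)
    have hb := big_diff _ _ (h1 (G ∪ G.biUnion Fx)) hs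
    refine le_antisymm (Cardinal.mk_set_le _) ?_
    rw [← hb]
    refine Cardinal.mk_le_mk_of_subset ?_
    rintro z ⟨hz, hz2⟩
    refine ⟨hsepmono _ _ Finset.subset_union_left hz, fun x hx => ?_⟩
    by_contra hlt
    push Not at hlt
    exact hz2 ⟨x, hx, hsepmono _ _ ((Finset.subset_biUnion_of_mem Fx hx).trans
      Finset.subset_union_right) hz, hlt⟩
  have final : ∀ ε : ℝ, 0 < ε → |μ f| ≤ 2 * ε := by
    intro ε hε
    obtain ⟨F, -, z, hz, hle⟩ := mainM h2
      (fun F => {z | z ∈ sepS F ∧ ∀ x ∈ F, |wgt μ z x| ≤ ε / (F.card + 1)})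
      (fun F z hz => hz.1) (fun F => claim2 _ (by positivity) F) μ hμ f hf ∅ ε hε
    have hsum : |∑ x ∈ F, wgt μ z x * f x| ≤ ε := by
      calc |∑ x ∈ F, wgt μ z x * f x| ≤ ∑ x ∈ F, |wgt μ z x * f x| := Finset.abs_sum_le_sum_abs _ _
        _ ≤ ∑ x ∈ F, ε / (F.card + 1) := by
          refine Finset.sum_le_sum (fun x hx => ?_)
          rw [abs_mul]
          exact (mul_le_of_le_one_right (abs_nonneg _) ((f.norm_coe_le_norm x).trans hf)).trans
            (hz.2 x hx)
        _ = F.card * (ε / (F.card + 1)) := by rw [Finset.sum_const, nsmul_eq_mul]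
        _ ≤ ε := by
          rw [mul_div_assoc', div_le_iff₀ (by positivity)]
          nlinarith
    rw [abs_le] at hle hsum ⊢
    constructor <;> linarith
  by_contra hne
  have hpos := abs_pos.2 hne
  have := final (|μ f| / 4) (by linarith)
  linarith

lemma L1Rep_of_ctP [Infinite X] (h1 : ∀ F : Finset X, #(sepS F) = #X)
    (h2 : ∀ P : Set X, #↥P < #X → ∀ x : X, #{z : X | x * z ∈ P} < #X)
    (μ : StrongDual ℝ (X →ᵇ ℝ)) (hμ : CtP μ) : L1Rep μ := by
  obtain ⟨ρ, hρ, he⟩ := exists_L1_part μ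
  have hc : CtP ρ := ctP_of_continuousOn ρ Set.univ (Set.subset_univ _)
    (continuous_of_L1Rep ρ hρ).continuousOn
  have hz := singular_zero h1 h2 (μ - ρ) (hμ.sub hc) (fun x => by
    rw [_root_.sub_apply, he, sub_self])
  have : μ = ρ := by
    ext f
    have hn : 0 < ‖f‖ + 1 := by positivity
    have := hz ((‖f‖ + 1)⁻¹ • f) (by
      rw [norm_smul, norm_inv, Real.norm_of_nonneg hn.le, inv_mul_le_iff₀ hn]
      linarith)
    rw [map_smul, smul_eq_mul, mul_eq_zero] at this
    rcases this with h | h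
    · exact absurd h (inv_ne_zero hn.ne')
    · rw [_root_.sub_apply] at h
      linarith
  rw [this]
  exact hρ

end main


/-- For an infinite semigroup satisfying (1) and (2) and any convolution subsemigroup
`S ⊆ M(X)` containing the uniform compactification `K`, the topological centre of `S`
is the set of `ℓ¹`-representable elements of `S`. -/
theorem stmt13 {X : Type*} [Semigroup X] [TopologicalSpace X] [DiscreteTopology X] [Infinite X]
    (h1 : ∀ F : Finset X,
      #{z : X | ∀ x ∈ F, ∀ y ∈ F, x ≠ y → x * z ≠ y * z} = #X)
    (h2 : ∀ P : Set X, #↥P < #X → ∀ x : X, #{z : X | x * z ∈ P} < #X)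
    (S : Set (StrongDual ℝ (X →ᵇ ℝ)))
    (hSmul : ∀ μ ∈ S, ∀ ν ∈ S, convMap (· * ·) μ ν ∈ S)
    (hKS : {μ : StrongDual ℝ (X →ᵇ ℝ) |
      StrongDual.toWeakDual μ ∈ closure (Set.range fun x : X => StrongDual.toWeakDual (evalCLM ℝ x))} ⊆ S) :
    {μ ∈ S | ContinuousOn
      (fun ν : WeakDual ℝ (X →ᵇ ℝ) =>
        StrongDual.toWeakDual (convMap (· * ·) μ (WeakDual.toStrongDual ν)))
      ((fun μ : StrongDual ℝ (X →ᵇ ℝ) => StrongDual.toWeakDual μ) '' S)} =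
    {μ ∈ S | L1Rep μ} := by
  ext μ
  constructor
  · rintro ⟨hS, hc⟩
    exact ⟨hS, L1Rep_of_ctP h1 h2 μ (ctP_of_continuousOn μ S hKS hc)⟩
  · rintro ⟨hS, hL⟩
    exact ⟨hS, (continuous_of_L1Rep μ hL).continuousOn⟩
end
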